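/- Let N be a normal subgroup of SL_n(ℤ) for n ≥ 3. Then either N is contained in the center of SL_n(ℤ) (hence N is finite, of order dividing 2), or the quotient SL_n(ℤ)/N is finite. -/

import Mathlib

/-! Commutators of a noncentral element of `N` with suitable unipotents `1 + x yᵀ` are again of
this form, and after a few of them `N` is seen to contain a nontrivial transvection. Since `n ≥ 3`,
commutators of transvections spread it to all positions, so `N` contains every transvection with
entry in some nonzero ideal `I`. These transvections reduce a matrix congruent to `1` modulo `I`,
up to conjugation, to one fixing a basis vector `e_p` and its dual. The group is generated by the
transvections in row `p` or column `p`, and the commutator of one of them with such a matrix is a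
product of transvections with entry in `I`. Hence the principal congruence subgroup of level `I`,
which has finite index, is central modulo `N`. The quotient by `N` is thus a perfect group whose
centre has finite index, and by Schur's theorem it is finite. -/

namespace SpecialLinearNormal

open Matrix hiding transvection
open Matrix.SpecialLinearGroup (transvection transvection_coe coe_mul coe_one)
open scoped commutatorElement

section Group

variable {G : Type*} [Group G]

theorem commutator_mem_left {N : Subgroup G} [N.Normal] {g : G} (hg : g ∈ N) (h : G) : ⁅g, h⁆ ∈ N :=
  Subgroup.commutator_le_left N ⊤ (Subgroup.commutator_mem_commutator hg (Subgroup.mem_top h))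

theorem commutator_mem_right {N : Subgroup G} [N.Normal] (g : G) {h : G} (hh : h ∈ N) :
    ⁅g, h⁆ ∈ N :=
  Subgroup.commutator_le_right ⊤ N (Subgroup.commutator_mem_commutator (Subgroup.mem_top g) hh)

theorem le_upperCentralSeriesStep (N : Subgroup G) [N.Normal] : N ≤ N.upperCentralSeriesStep :=
  fun _ hg h ↦ commutator_mem_left hg h

instance upperCentralSeriesStep_normal (N : Subgroup G) [N.Normal] :
    N.upperCentralSeriesStep.Normal :=
  N.upperCentralSeriesStep_eq_comap_center ▸ inferInstance

theorem mem_upperCentralSeriesStep_of_closure_eq_top {S : Set G} (hS : Subgroup.closure S = ⊤)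
    {N : Subgroup G} [N.Normal] {g : G} (hg : ∀ s ∈ S, ⁅g, s⁆ ∈ N) :
    g ∈ N.upperCentralSeriesStep := by
  let C := (Subgroup.centralizer {QuotientGroup.mk' N g}).comap (QuotientGroup.mk' N)
  have mem_C (h : G) : h ∈ C ↔ ⁅g, h⁆ ∈ N := by
    rw [Subgroup.mem_comap, Subgroup.mem_centralizer_singleton_iff, eq_comm,
      ← commutatorElement_eq_one_iff_mul_comm, ← map_commutatorElement]
    exact QuotientGroup.eq_one_iff _
  have hC : C = ⊤ := top_le_iff.1 (hS ▸ (Subgroup.closure_le C).2 fun s hs ↦ (mem_C s).2 (hg s hs))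
  exact fun h ↦ (mem_C h).1 (hC ▸ Subgroup.mem_top h)

theorem commutator_eq_of_mk_eq {x x' y y' : G} (hx : (x : G ⧸ Subgroup.center G) = x')
    (hy : (y : G ⧸ Subgroup.center G) = y') : ⁅x, y⁆ = ⁅x', y'⁆ := by
  have left {x x' : G} (y : G) (h : (x : G ⧸ Subgroup.center G) = x') : ⁅x', y⁆ = ⁅x, y⁆ := by
    have hu := Subgroup.mem_center_iff.1 (QuotientGroup.eq.1 h) y
    rw [← mul_inv_cancel_left x x', commutatorElement_mul_left_eq_conj_mul,
      commutatorElement_eq_one_iff_mul_comm.2 hu.symm, mul_one, mul_inv_cancel, one_mul]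
  rw [← left y hx, ← commutatorElement_inv y x', ← left x' hy, commutatorElement_inv]

theorem finite_commutatorSet [Finite (G ⧸ Subgroup.center G)] : Finite (commutatorSet G) := by
  refine Set.Finite.subset (Set.finite_range
    fun z : (G ⧸ Subgroup.center G) × (G ⧸ Subgroup.center G) ↦ ⁅z.1.out, z.2.out⁆) ?_
  rintro _ ⟨x, y, rfl⟩
  exact ⟨(x, y), commutator_eq_of_mk_eq (Quotient.out_eq' _) (Quotient.out_eq' _)⟩

theorem finite_of_isPerfect [Group.IsPerfect G] [(Subgroup.center G).FiniteIndex] : Finite G := by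
  have := finite_commutatorSet (G := G)
  have h : Finite (commutator G) := inferInstance
  rw [Group.IsPerfect.commutator_eq_top] at h
  exact Finite.of_equiv _ Subgroup.topEquiv.toEquiv

end Group

variable {ι R : Type*} [Fintype ι] [DecidableEq ι]

section RankOne

variable [CommRing R]

/-- The unipotent matrix `1 + x yᵀ`, which has determinant one because `y · x = 0`. Transvections
are the case where `x` and `y` are multiples of basis vectors. -/
def rankOne (x y : ι → R) (h : y ⬝ᵥ x = 0) : Matrix.SpecialLinearGroup ι R :=
  ⟨1 + vecMulVec x y, by
    rw [vecMulVec_eq Unit, det_one_add_replicateCol_mul_replicateRow, h, add_zero]⟩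

theorem coe_rankOne (x y : ι → R) (h : y ⬝ᵥ x = 0) : (rankOne x y h).1 = 1 + vecMulVec x y := rfl

theorem rankOne_single_single {i j : ι} (hij : i ≠ j) (a b : R)
    (h : Pi.single j b ⬝ᵥ Pi.single i a = 0) :
    rankOne (Pi.single i a) (Pi.single j b) h = transvection hij (a * b) := by
  apply Subtype.ext
  ext k l
  by_cases hk : k = i <;> by_cases hl : l = j <;>
    simp [coe_rankOne, transvection_coe, vecMulVec_apply, hk, hl, Ne.symm]

theorem rankOne_mul_rankOne_left (x x' y : ι → R) (h : y ⬝ᵥ x = 0) (h' : y ⬝ᵥ x' = 0) :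
    rankOne x y h * rankOne x' y h' = rankOne (x + x') y (by simp [h, h']) := by
  apply Subtype.ext
  simp [coe_rankOne, mul_add, add_mul, vecMulVec_mul_vecMulVec, h', add_vecMulVec, add_assoc]

theorem rankOne_mul_rankOne_right (x y y' : ι → R) (h : y ⬝ᵥ x = 0) (h' : y' ⬝ᵥ x = 0) :
    rankOne x y h * rankOne x y' h' = rankOne x (y + y') (by simp [h, h']) := by
  apply Subtype.ext
  simp [coe_rankOne, mul_add, add_mul, vecMulVec_mul_vecMulVec, h, vecMulVec_add, add_assoc]

theorem mulVec_inv_eq {g : Matrix.SpecialLinearGroup ι R} {x : ι → R} (hx : g.1 *ᵥ x = x) :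
    g⁻¹.1 *ᵥ x = x := by
  nth_rw 1 [← hx]
  rw [mulVec_mulVec, ← coe_mul]
  simp

theorem vecMul_inv_eq {g : Matrix.SpecialLinearGroup ι R} {y : ι → R} (hy : y ᵥ* g.1 = y) :
    y ᵥ* g⁻¹.1 = y := by
  nth_rw 1 [← hy]
  rw [vecMul_vecMul, ← coe_mul, mul_inv_cancel, coe_one, vecMul_one]

theorem commutator_rankOne_left {g : Matrix.SpecialLinearGroup ι R} {x w : ι → R}
    (hw : w ᵥ* g.1 = w) (h : w ⬝ᵥ x = 0) :
    ⁅g, rankOne x w h⁆ =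
      rankOne (g.1 *ᵥ x - x) w (by rw [dotProduct_sub, dotProduct_mulVec, hw, sub_self]) := by
  have hgx : w ⬝ᵥ (g.1 *ᵥ x) = 0 := by rw [dotProduct_mulVec, hw, h]
  have conj : g * rankOne x w h = rankOne (g.1 *ᵥ x) w hgx * g := by
    apply Subtype.ext
    simp [coe_rankOne, mul_add, add_mul, mul_vecMulVec, vecMulVec_mul, hw]
  rw [commutatorElement_def, mul_inv_eq_iff_eq_mul, conj, mul_inv_cancel_right,
    rankOne_mul_rankOne_left]
  simp

theorem commutator_rankOne_right {g : Matrix.SpecialLinearGroup ι R} {x y : ι → R}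
    (hx : g.1 *ᵥ x = x) (h : y ⬝ᵥ x = 0) :
    ⁅g, rankOne x y h⁆ = rankOne x (y ᵥ* g⁻¹.1 - y)
      (by rw [sub_dotProduct, ← dotProduct_mulVec, mulVec_inv_eq hx, sub_self]) := by
  have hgy : (y ᵥ* g⁻¹.1) ⬝ᵥ x = 0 := by rw [← dotProduct_mulVec, mulVec_inv_eq hx, h]
  have conj : g * rankOne x y h = rankOne x (y ᵥ* g⁻¹.1) hgy * g := by
    apply Subtype.ext
    have : y ᵥ* g⁻¹.1 ᵥ* g.1 = y := by rw [vecMul_vecMul, ← coe_mul]; simp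
    simp only [coe_mul, coe_rankOne, mul_add, add_mul, mul_vecMulVec, vecMulVec_mul, hx, this,
      mul_one, one_mul]
  rw [commutatorElement_def, mul_inv_eq_iff_eq_mul, conj, mul_inv_cancel_right,
    rankOne_mul_rankOne_right]
  simp

theorem rankOne_mem_left {K : Subgroup (Matrix.SpecialLinearGroup ι R)} {p : ι} {x : ι → R}
    (hK : ∀ i (hi : i ≠ p), transvection hi (x i) ∈ K) (h : Pi.single p 1 ⬝ᵥ x = 0) :
    rankOne x (Pi.single p 1) h ∈ K := by
  let P (u : ι → R) := ∃ h, rankOne u (Pi.single p 1) h ∈ K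
  have hadd (u v : ι → R) : P u → P v → P (u + v) := fun ⟨hu, hu'⟩ ⟨hv, hv'⟩ ↦
    ⟨_, rankOne_mul_rankOne_left u v _ hu hv ▸ mul_mem hu' hv'⟩
  have hzero : P 0 := ⟨by simp, by convert K.one_mem; apply Subtype.ext; simp [coe_rankOne]⟩
  have hsum : P (∑ i, Pi.single i (x i)) := by
    refine Finset.sum_induction _ P hadd hzero fun i _ ↦ ?_
    obtain rfl | hi := eq_or_ne i p
    · simpa [show x i = 0 by simpa using h] using hzero
    · exact ⟨by simp [hi], by rw [rankOne_single_single hi, mul_one]; exact hK i hi⟩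
  rw [Finset.univ_sum_single] at hsum
  exact hsum.2

theorem rankOne_mem_right {K : Subgroup (Matrix.SpecialLinearGroup ι R)} {p : ι} {y : ι → R}
    (hK : ∀ j (hj : p ≠ j), transvection hj (y j) ∈ K) (h : y ⬝ᵥ Pi.single p 1 = 0) :
    rankOne (Pi.single p 1) y h ∈ K := by
  let P (u : ι → R) := ∃ h, rankOne (Pi.single p 1) u h ∈ K
  have hadd (u v : ι → R) : P u → P v → P (u + v) := fun ⟨hu, hu'⟩ ⟨hv, hv'⟩ ↦
    ⟨_, rankOne_mul_rankOne_right _ u v hu hv ▸ mul_mem hu' hv'⟩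
  have hzero : P 0 := ⟨by simp, by convert K.one_mem; apply Subtype.ext; simp [coe_rankOne]⟩
  have hsum : P (∑ j, Pi.single j (y j)) := by
    refine Finset.sum_induction _ P hadd hzero fun j _ ↦ ?_
    obtain rfl | hj := eq_or_ne p j
    · simpa [show y p = 0 by simpa using h] using hzero
    · exact ⟨by simp [hj.symm], by rw [rankOne_single_single hj, one_mul]; exact hK j hj⟩
  rw [Finset.univ_sum_single] at hsum
  exact hsum.2

theorem transvection_mulVec {i j : ι} (hij : i ≠ j) (c : R) (v : ι → R) :
    (transvection hij c).1 *ᵥ v = v + Pi.single i (c * v j) := by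
  rw [transvection_coe, add_mulVec, one_mulVec, single_mulVec, ← Pi.single]

theorem vecMul_transvection {i j : ι} (hij : i ≠ j) (c : R) (v : ι → R) :
    v ᵥ* (transvection hij c).1 = v + Pi.single j (v i * c) := by
  rw [transvection_coe, ← transpose_single, vecMul_add, vecMul_one, vecMul_transpose, single_mulVec,
    ← Pi.single, mul_comm]

theorem commutator_transvection {i j k : ι} (hij : i ≠ j) (hjk : j ≠ k) (hik : i ≠ k) (a b : R) :
    ⁅transvection hij a, transvection hjk b⁆ = transvection hik (a * b) := by
  have h : Pi.single k b ⬝ᵥ Pi.single j (1 : R) = 0 := by simp [hjk.symm]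
  have hw : Pi.single k b ᵥ* (transvection hij a).1 = Pi.single k b := by
    simp [vecMul_transvection, hik]
  have := commutator_rankOne_left hw h
  simp only [rankOne_single_single hjk, transvection_mulVec] at this
  simpa [rankOne_single_single hik] using this

end RankOne

section Generation

section CommRing

variable [CommRing R]

/-- The subgroup generated by the transvections with both indices in `T`. -/
def elementary (T : Set ι) : Subgroup (Matrix.SpecialLinearGroup ι R) :=
  Subgroup.closure {g | ∃ i ∈ T, ∃ j ∈ T, ∃ (hij : i ≠ j) (c : R), transvection hij c = g}

/-- The copy of the special linear group of index set `T` in that of index set `ι`: matrices that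
agree with the identity outside `T × T`. -/
def block (T : Set ι) : Subgroup (Matrix.SpecialLinearGroup ι R) where
  carrier := {g | ∀ i ∉ T,
    Pi.single i 1 ᵥ* g.1 = Pi.single i 1 ∧ g.1 *ᵥ Pi.single i 1 = Pi.single i 1}
  one_mem' i _ := ⟨by rw [coe_one, vecMul_one], by rw [coe_one, one_mulVec]⟩
  mul_mem' hg hh i hi := by
    rw [coe_mul, ← vecMul_vecMul, ← mulVec_mulVec, (hg i hi).1, (hh i hi).1, (hh i hi).2,
      (hg i hi).2]
    exact ⟨rfl, rfl⟩
  inv_mem' hg i hi := ⟨vecMul_inv_eq (hg i hi).1, mulVec_inv_eq (hg i hi).2⟩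

theorem transvection_mem_elementary {T : Set ι} {i j : ι} (hi : i ∈ T) (hj : j ∈ T) (hij : i ≠ j)
    (c : R) : transvection hij c ∈ elementary T :=
  Subgroup.subset_closure ⟨i, hi, j, hj, hij, c, rfl⟩

theorem elementary_mono {S T : Set ι} (h : S ⊆ T) :
    (elementary S : Subgroup (Matrix.SpecialLinearGroup ι R)) ≤ elementary T :=
  Subgroup.closure_mono fun _ ⟨i, hi, j, hj, g⟩ ↦ ⟨i, h hi, j, h hj, g⟩

theorem elementary_le_block (T : Set ι) :
    (elementary T : Subgroup (Matrix.SpecialLinearGroup ι R)) ≤ block T := by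
  refine (Subgroup.closure_le _).2 ?_
  rintro _ ⟨i, hi, j, hj, hij, c, rfl⟩ k hk
  have hki : k ≠ i := by rintro rfl; exact hk hi
  have hkj : k ≠ j := by rintro rfl; exact hk hj
  rw [transvection_mulVec, vecMul_transvection]
  simp [hki, hkj]

theorem vecMul_apply_of_mem_block {T : Set ι} {g : Matrix.SpecialLinearGroup ι R} (hg : g ∈ block T)
    (v : ι → R) {j : ι} (hj : j ∉ T) : (v ᵥ* g.1) j = v j := by
  rw [← dotProduct_single_one (v ᵥ* g.1), ← dotProduct_mulVec, (hg j hj).2, dotProduct_single_one]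

theorem exists_elementary_swap_zero {p q : ι} (hpq : p ≠ q) {v : ι → R} (hq : v q = 0) :
    ∃ g ∈ elementary {p, q}, (v ᵥ* g.1) p = 0 := by
  refine ⟨transvection hpq 1 * transvection hpq.symm (-1),
    mul_mem (transvection_mem_elementary (by simp) (by simp) _ _)
      (transvection_mem_elementary (by simp) (by simp) _ _), ?_⟩
  rw [coe_mul, ← vecMul_vecMul, vecMul_transvection, vecMul_transvection]
  simp [hpq, hq]

theorem exists_elementary_single_unit {p q : ι} (hpq : p ≠ q) (u : Rˣ) :
    ∃ g ∈ elementary {p, q}, Pi.single p (u : R) ᵥ* g.1 = Pi.single p 1 := by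
  refine ⟨transvection hpq ((u⁻¹ : Rˣ) : R) * transvection hpq.symm (1 - u : R) *
    transvection hpq (-1), mul_mem (mul_mem (transvection_mem_elementary (by simp) (by simp) _ _)
      (transvection_mem_elementary (by simp) (by simp) _ _))
      (transvection_mem_elementary (by simp) (by simp) _ _), ?_⟩
  simp only [coe_mul, ← vecMul_vecMul, vecMul_transvection]
  ext k
  obtain rfl | hk := eq_or_ne k p <;> obtain rfl | hk' := eq_or_ne k q <;> simp_all

theorem isUnit_of_vecMul_eq_single {p : ι} {u : R} (g : Matrix.SpecialLinearGroup ι R)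
    (h : Pi.single p 1 ᵥ* g.1 = Pi.single p u) : IsUnit u := by
  have hinv : Pi.single p u ᵥ* g⁻¹.1 = Pi.single p 1 := by
    rw [← h, vecMul_vecMul, ← coe_mul, mul_inv_cancel, coe_one, vecMul_one]
  refine .of_mul_eq_one (g⁻¹.1 p p) ?_
  simpa [single_vecMul] using congrFun hinv p

theorem dotProduct_sub_mulVec_eq_zero {g : Matrix.SpecialLinearGroup ι R} {w : ι → R}
    (hw : w ᵥ* g.1 = w) (x : ι → R) : w ⬝ᵥ (x - g.1 *ᵥ x) = 0 := by
  rw [dotProduct_sub, dotProduct_mulVec, hw, sub_self]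

theorem rankOne_mul_mem_block {p : ι} {T : Set ι} {B : Matrix.SpecialLinearGroup ι R}
    (hB : B ∈ block (insert p T)) (hp : Pi.single p 1 ᵥ* B.1 = Pi.single p 1) :
    rankOne _ _ (dotProduct_sub_mulVec_eq_zero hp (Pi.single p 1)) * B ∈ block T := by
  set c := Pi.single p 1 - B.1 *ᵥ Pi.single p 1
  have hc : Pi.single p 1 ⬝ᵥ c = 0 := dotProduct_sub_mulVec_eq_zero hp _
  have hrow (v : ι → R) : v ᵥ* (rankOne c _ hc * B).1 = v ᵥ* B.1 + (v ⬝ᵥ c) • Pi.single p 1 := by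
    rw [coe_mul, ← vecMul_vecMul, coe_rankOne, vecMul_add, vecMul_one, vecMul_vecMulVec, add_vecMul,
      smul_vecMul, hp]
  have hcol (v : ι → R) : (rankOne c _ hc * B).1 *ᵥ v = B.1 *ᵥ v + (Pi.single p 1 ⬝ᵥ v) • c := by
    rw [coe_mul, ← mulVec_mulVec, coe_rankOne, add_mulVec, one_mulVec, vecMulVec_mulVec,
      dotProduct_mulVec, hp, op_smul_eq_smul]
  intro i hi
  rw [hrow, hcol]
  obtain rfl | hip := eq_or_ne i p
  · rw [hp, hc]
    simp [c]
  · obtain ⟨hiB, hBi⟩ := hB i (by grind)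
    rw [hiB, hBi, dotProduct_sub, dotProduct_mulVec, hiB]
    simp [hip]

theorem block_empty : block ∅ = (⊥ : Subgroup (Matrix.SpecialLinearGroup ι R)) :=
  (Subgroup.eq_bot_iff_forall _).2 fun g hg ↦ Subtype.ext <| ext_of_single_vecMul fun i ↦ by
    rw [(hg i (by simp)).1, coe_one, vecMul_one]

theorem block_singleton (p : ι) : block {p} = (⊥ : Subgroup (Matrix.SpecialLinearGroup ι R)) := by
  refine (Subgroup.eq_bot_iff_forall _).2 fun g hg ↦ ?_
  have hdiag : g.1 = diagonal (Function.update 1 p (g.1 p p)) := by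
    refine ext_of_single_vecMul fun i ↦ ?_
    obtain rfl | hi := eq_or_ne i p
    · ext j
      obtain rfl | hj := eq_or_ne j i
      · simp
      · rw [vecMul_apply_of_mem_block hg _ (by simpa using hj)]
        simp [hj]
    · rw [(hg i (by simpa using hi)).1]
      simp [hi]
  have hpp : g.1 p p = 1 := by
    simpa [Finset.prod_update_of_mem] using (congrArg det hdiag).symm
  refine Subtype.ext ?_
  rw [hdiag, hpp, coe_one]
  simp

end CommRing

variable [EuclideanDomain R]

theorem exists_elementary_vecMul_apply_eq_zero {p q : ι} (hpq : p ≠ q) (v : ι → R) :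
    ∃ g ∈ elementary {p, q}, (v ᵥ* g.1) p = 0 := by
  suffices H : ∀ a b : R, ∀ p q, p ≠ q → ∀ v : ι → R, v p = a → v q = b →
      ∃ g ∈ elementary {p, q}, (v ᵥ* g.1) p = 0 from H _ _ p q hpq v rfl rfl
  intro a b
  induction a, b using EuclideanDomain.GCD.induction with
  | H0 b => exact fun p q _ v hp _ ↦ ⟨1, one_mem _, by rwa [coe_one, vecMul_one]⟩
  | H1 a b _ ih =>
    intro p q hpq v hp hq
    let t := transvection hpq (-(b / a))
    have ht : t ∈ elementary {p, q} := transvection_mem_elementary (by simp) (by simp) _ _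
    obtain ⟨g, hg, hgq⟩ := ih q p hpq.symm (v ᵥ* t.1)
      (by simp [t, vecMul_transvection, hp, hq, EuclideanDomain.mod_eq_sub_mul_div, sub_eq_add_neg])
      (by simp [t, vecMul_transvection, hp, hpq])
    obtain ⟨h, hh, hhp⟩ := exists_elementary_swap_zero hpq hgq
    rw [Set.pair_comm] at hg
    exact ⟨t * g * h, mul_mem (mul_mem ht hg) hh, by simpa [vecMul_vecMul, mul_assoc] using hhp⟩

theorem exists_elementary_vecMul_eq_zero_on (v : ι → R) {p : ι} {T : Set ι} (hp : p ∉ T) :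
    ∃ g ∈ elementary (insert p T), ∀ j ∈ T, (v ᵥ* g.1) j = 0 := by
  induction T, T.toFinite using Set.Finite.induction_on with
  | empty => exact ⟨1, one_mem _, by simp⟩
  | @insert q T hq _ ih =>
    rw [Set.mem_insert_iff, not_or] at hp
    obtain ⟨g, hg, hgT⟩ := ih hp.2
    obtain ⟨h, hh, hhq⟩ := exists_elementary_vecMul_apply_eq_zero (Ne.symm hp.1) (v ᵥ* g.1)
    refine ⟨g * h, mul_mem (elementary_mono (by grind) hg) (elementary_mono (by grind) hh), ?_⟩
    rw [coe_mul, ← vecMul_vecMul]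
    rintro j (rfl | hj)
    · exact hhq
    · rw [vecMul_apply_of_mem_block (elementary_le_block _ hh) _ (by grind), hgT j hj]

theorem exists_elementary_row_eq_single {p q : ι} {T : Set ι} (hp : p ∉ T) (hq : q ∈ T)
    {A : Matrix.SpecialLinearGroup ι R} (hA : A ∈ block (insert p T)) :
    ∃ g ∈ elementary (insert p T), Pi.single p 1 ᵥ* (A * g).1 = Pi.single p 1 := by
  obtain ⟨g, hg, hgT⟩ := exists_elementary_vecMul_eq_zero_on (Pi.single p 1 ᵥ* A.1) hp
  rw [vecMul_vecMul, ← coe_mul] at hgT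
  have hAg : Pi.single p 1 ᵥ* (A * g).1 = Pi.single p ((A * g).1 p p) := by
    ext j
    by_cases hjp : j = p
    · subst hjp; simp
    by_cases hj : j ∈ T
    · rw [hgT j hj, Pi.single_eq_of_ne hjp]
    · rw [vecMul_apply_of_mem_block (mul_mem hA (elementary_le_block _ hg)) _ (by grind)]
      simp [hjp]
  obtain ⟨u, hu⟩ := isUnit_of_vecMul_eq_single _ hAg
  obtain ⟨h, hh, hhp⟩ := exists_elementary_single_unit (by grind : p ≠ q) u
  refine ⟨g * h, mul_mem hg (elementary_mono (by grind) hh), ?_⟩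
  rw [← mul_assoc, coe_mul, ← vecMul_vecMul, hAg, ← hu, hhp]

theorem block_eq_elementary (T : Set ι) :
    block T = (elementary T : Subgroup (Matrix.SpecialLinearGroup ι R)) := by
  refine le_antisymm ?_ (elementary_le_block T)
  induction T, T.toFinite using Set.Finite.induction_on with
  | empty => exact block_empty.trans_le bot_le
  | @insert p T hp _ ih =>
    obtain rfl | ⟨q, hq⟩ := T.eq_empty_or_nonempty
    · rw [insert_empty_eq, block_singleton]
      exact bot_le
    intro A hA
    obtain ⟨g, hg, hgp⟩ := exists_elementary_row_eq_single hp hq hA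
    have hAg := mul_mem hA (elementary_le_block _ hg)
    have hcol : rankOne _ _ (dotProduct_sub_mulVec_eq_zero hgp (Pi.single p 1)) ∈
        elementary (insert p T) := by
      refine rankOne_mem_left (fun i hi ↦ ?_) _
      by_cases hiT : i ∈ T
      · exact transvection_mem_elementary (.inr hiT) (.inl rfl) _ _
      · have hi0 : (Pi.single p 1 - (A * g).1 *ᵥ Pi.single p 1 : ι → R) i = 0 := by
          simpa [hi] using congrFun (hAg i (by grind)).1 p
        rw [hi0, SpecialLinearGroup.transvection_coeff_zero]
        exact one_mem _
    have hmem := elementary_mono (Set.subset_insert p T) (ih (rankOne_mul_mem_block hAg hgp))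
    rwa [mul_mem_cancel_left hcol, mul_mem_cancel_right hg] at hmem

theorem elementary_univ : elementary Set.univ = (⊤ : Subgroup (Matrix.SpecialLinearGroup ι R)) := by
  rw [← block_eq_elementary, eq_top_iff]
  exact fun _ _ _ h ↦ (h trivial).elim

end Generation

section Level

variable [CommRing R]

/-- The subgroup generated by the transvections with entry in `I`. Unlike the relative elementary
subgroup of `K`-theory it is not made normal, so that it can be compared directly with any subgroup
known to contain these transvections. -/
def elementaryOfIdeal (I : Ideal R) : Subgroup (Matrix.SpecialLinearGroup ι R) :=
  Subgroup.closure {g | ∃ (i j : ι) (hij : i ≠ j), ∃ c ∈ I, transvection hij c = g}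

theorem transvection_mem_elementaryOfIdeal {I : Ideal R} {i j : ι} (hij : i ≠ j) {c : R}
    (hc : c ∈ I) : transvection hij c ∈ elementaryOfIdeal I :=
  Subgroup.subset_closure ⟨i, j, hij, c, hc, rfl⟩

variable {N : Subgroup (Matrix.SpecialLinearGroup ι R)}

section Normal

variable [N.Normal]

theorem transvection_mem_of_mem_same_row (hι : 3 ≤ ENat.card ι) {i j k : ι} {hij : i ≠ j} {c : R}
    (hc : transvection hij c ∈ N) (hik : i ≠ k) (r : R) : transvection hik (c * r) ∈ N := by
  have of_ne {j k : ι} {hij : i ≠ j} (hc : transvection hij c ∈ N) (hjk : j ≠ k) (hik : i ≠ k)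
      (r : R) : transvection hik (c * r) ∈ N :=
    commutator_transvection hij hjk hik c r ▸ commutator_mem_left hc _
  obtain rfl | hjk := eq_or_ne j k
  · obtain ⟨l, hli, hlj⟩ := ENat.exists_ne_ne_of_three_le hι i j
    exact of_ne (hij := hli.symm) (by simpa using of_ne hc hlj.symm hli.symm 1) hlj hik r
  · exact of_ne hc hjk hik r

theorem transvection_mem_of_mem_same_col {i j k : ι} {hij : i ≠ j} {c : R}
    (hc : transvection hij c ∈ N) (hkj : k ≠ j) : transvection hkj c ∈ N := by
  obtain rfl | hki := eq_or_ne k i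
  · exact hc
  · rw [← one_mul c, ← commutator_transvection hki hij hkj]
    exact commutator_mem_right _ hc

theorem transvection_mem_of_mem (hι : 3 ≤ ENat.card ι) {i j k l : ι} {hij : i ≠ j} {c : R}
    (hc : transvection hij c ∈ N) (hkl : k ≠ l) (r : R) : transvection hkl (c * r) ∈ N := by
  obtain ⟨m, hmi, hmk⟩ := ENat.exists_ne_ne_of_three_le hι i k
  have him : transvection hmi.symm c ∈ N := by
    simpa using transvection_mem_of_mem_same_row hι hc hmi.symm 1
  exact transvection_mem_of_mem_same_row hι (transvection_mem_of_mem_same_col him hmk.symm) hkl r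

theorem exists_transvection_mem (hι : 3 ≤ ENat.card ι) {j : ι} {x : ι → R} (hx : x ≠ 0)
    (h : Pi.single j 1 ⬝ᵥ x = 0) (hN : rankOne x (Pi.single j 1) h ∈ N) :
    ∃ (i : ι) (hij : i ≠ j), ∃ c ≠ 0, transvection hij c ∈ N := by
  obtain ⟨l, hl⟩ := Function.ne_iff.1 hx
  obtain ⟨i, hij, hil⟩ := ENat.exists_ne_ne_of_three_le hι j l
  have hfix : Pi.single j 1 ᵥ* (transvection hil (1 : R)).1 = Pi.single j 1 := by
    simp [vecMul_transvection, hij]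
  refine ⟨i, hij, x l, hl, ?_⟩
  have hcomm := commutator_rankOne_left hfix h
  simp only [transvection_mulVec, add_sub_cancel_left, rankOne_single_single hij, one_mul,
    mul_one] at hcomm
  exact hcomm ▸ commutator_mem_right _ hN

end Normal

theorem exists_ne_zero_dotProduct_eq_zero {κ : Type*} [Fintype κ] [Nontrivial R]
    (hκ : 3 ≤ ENat.card κ) (u : κ → R) (i : κ) : ∃ x ≠ 0, x i = 0 ∧ u ⬝ᵥ x = 0 := by
  classical
  obtain ⟨j, hji, -⟩ := ENat.exists_ne_ne_of_three_le hκ i i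
  obtain ⟨k, hki, hkj⟩ := ENat.exists_ne_ne_of_three_le hκ i j
  by_cases huj : u j = 0
  · exact ⟨Pi.single j 1, by simp, by simp [hji.symm], by simp [huj]⟩
  · refine ⟨Pi.single j (u k) - Pi.single k (u j), fun h ↦ huj ?_, ?_, ?_⟩
    · simpa [hkj] using congrFun h k
    · simp [hji.symm, hki.symm]
    · simp [dotProduct_sub, mul_comm]

theorem exists_commutator_transvection_ne_one {A : Matrix.SpecialLinearGroup ι R}
    (hA : A ∉ Subgroup.center (Matrix.SpecialLinearGroup ι R)) :
    ∃ (i j : ι) (hij : i ≠ j) (c : R), ⁅A, transvection hij c⁆ ≠ 1 := by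
  contrapose! hA
  have hcomm (i j : ι) (hij : i ≠ j) (c : R) : A * transvection hij c = transvection hij c * A :=
    commutatorElement_eq_one_iff_mul_comm.1 (hA i j hij c)
  obtain ⟨r, hr⟩ := mem_range_scalar_of_commute_transvectionStruct (M := A.1) fun t ↦
    (congrArg Subtype.val (hcomm t.i t.j t.hij t.c)).symm
  refine Matrix.SpecialLinearGroup.mem_center_iff.2 ⟨r, ?_, hr⟩
  simpa [← hr] using A.2

variable [N.Normal]

theorem exists_mem_fixing_row [Nontrivial R] (hι : 3 ≤ ENat.card ι)
    (hN : ¬ N ≤ Subgroup.center (Matrix.SpecialLinearGroup ι R)) :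
    ∃ g ∈ N, g ≠ 1 ∧ ∃ w ≠ 0, w ᵥ* g.1 = w := by
  obtain ⟨A, hAN, hA⟩ := SetLike.not_le_iff_exists.1 hN
  obtain ⟨i, j, hij, c, hne⟩ := exists_commutator_transvection_ne_one hA
  obtain ⟨w, hw0, hwi, hw⟩ := exists_ne_zero_dotProduct_eq_zero hι (A.1 *ᵥ Pi.single i 1) i
  refine ⟨_, commutator_mem_left hAN _, hne, w, hw0, ?_⟩
  have hwA : (w ᵥ* A.1) i = 0 := by
    rw [← dotProduct_single_one (w ᵥ* A.1), ← dotProduct_mulVec, dotProduct_comm, hw]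
  have hwt : w ᵥ* (transvection hij c).1 = w := by simp [vecMul_transvection, hwi]
  have hwAt : w ᵥ* A.1 ᵥ* (transvection hij c).1 = w ᵥ* A.1 := by
    simp [vecMul_transvection hij c (w ᵥ* A.1), hwA]
  have hwAA : w ᵥ* A.1 ᵥ* A⁻¹.1 = w := by
    rw [vecMul_vecMul, ← coe_mul, mul_inv_cancel, coe_one, vecMul_one]
  simp only [commutatorElement_def, coe_mul, ← vecMul_vecMul]
  rw [hwAt, hwAA, vecMul_inv_eq hwt]

theorem exists_rankOne_mem [Nontrivial R] (hι : 3 ≤ ENat.card ι)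
    {g : Matrix.SpecialLinearGroup ι R} (hgN : g ∈ N) (hg : g ≠ 1) {w : ι → R} (hw : w ≠ 0)
    (hwg : w ᵥ* g.1 = w) :
    ∃ x ≠ 0, ∃ y ≠ 0, ∃ h, rankOne x y h ∈ N := by
  by_cases! hfix : ∃ x, w ⬝ᵥ x = 0 ∧ g.1 *ᵥ x ≠ x
  · obtain ⟨x, hwx, hx⟩ := hfix
    exact ⟨_, sub_ne_zero.2 hx, w, hw, _,
      commutator_rankOne_left hwg hwx ▸ commutator_mem_left hgN _⟩
  · obtain ⟨i, hi⟩ : ∃ i, Pi.single i 1 ᵥ* g⁻¹.1 ≠ Pi.single i 1 := by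
      contrapose! hg
      refine inv_eq_one.1 (Subtype.ext <| ext_of_single_vecMul fun i ↦ ?_)
      rw [hg, coe_one, vecMul_one]
    obtain ⟨x, hx, hxi, hwx⟩ := exists_ne_zero_dotProduct_eq_zero hι w i
    exact ⟨x, hx, _, sub_ne_zero.2 hi, _,
      commutator_rankOne_right (hfix x hwx) (y := Pi.single i 1) (by simpa) ▸
        commutator_mem_left hgN _⟩

variable [IsDomain R]

theorem exists_rankOne_mem_apply_eq_zero (hι : 3 ≤ ENat.card ι) {x y : ι → R} (hx : x ≠ 0)
    (h : y ⬝ᵥ x = 0) (hN : rankOne x y h ∈ N) (j : ι) :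
    ∃ x' ≠ 0, x' j = 0 ∧ ∃ h', rankOne x' y h' ∈ N := by
  by_cases hxj : x j = 0
  · exact ⟨x, hx, hxj, h, hN⟩
  obtain ⟨a, ha, haj, hya⟩ := exists_ne_zero_dotProduct_eq_zero hι y j
  let g := rankOne a (Pi.single j 1) (by simpa)
  have hgx : g.1 *ᵥ x - x = x j • a := by simp [g, coe_rankOne, add_mulVec, vecMulVec_mulVec]
  have hy : y ᵥ* g.1 = y := by simp [g, coe_rankOne, vecMul_add, vecMul_vecMulVec, hya]
  refine ⟨g.1 *ᵥ x - x, by simp [hgx, hxj, ha], by rw [hgx]; simp [haj], _,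
    commutator_rankOne_left hy h ▸ commutator_mem_right _ hN⟩

theorem exists_rankOne_single_mem (hι : 3 ≤ ENat.card ι) {x y : ι → R} (hx : x ≠ 0) (hy : y ≠ 0)
    (h : y ⬝ᵥ x = 0) (hN : rankOne x y h ∈ N) :
    ∃ (j : ι) (x' : ι → R), x' ≠ 0 ∧ ∃ h', rankOne x' (Pi.single j 1) h' ∈ N := by
  obtain ⟨k, hk⟩ := Function.ne_iff.1 hy
  obtain ⟨j, hjk, -⟩ := ENat.exists_ne_ne_of_three_le hι k k
  obtain ⟨x', hx', hxj, h', hN'⟩ := exists_rankOne_mem_apply_eq_zero hι hx h hN j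
  have hfix : Pi.single j 1 ᵥ* (rankOne x' y h').1 = Pi.single j 1 := by
    rw [coe_rankOne, vecMul_add, vecMul_one, vecMul_vecMulVec, single_one_dotProduct, hxj,
      zero_smul, add_zero]
  have hmove : (rankOne x' y h').1 *ᵥ Pi.single k 1 - Pi.single k 1 = y k • x' := by
    rw [coe_rankOne, add_mulVec, one_mulVec, vecMulVec_mulVec, dotProduct_single_one,
      op_smul_eq_smul, add_sub_cancel_left]
  refine ⟨j, _, ?_, _, commutator_rankOne_left hfix (x := Pi.single k 1) (by simp [hjk]) ▸
    commutator_mem_left hN' _⟩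
  rw [hmove]
  exact smul_ne_zero hk hx'

theorem exists_elementaryOfIdeal_le (hι : 3 ≤ ENat.card ι)
    (hN : ¬ N ≤ Subgroup.center (Matrix.SpecialLinearGroup ι R)) :
    ∃ I : Ideal R, I ≠ ⊥ ∧ elementaryOfIdeal I ≤ N := by
  obtain ⟨g, hgN, hg, w, hw, hwg⟩ := exists_mem_fixing_row hι hN
  obtain ⟨x, hx, y, hy, h, hxy⟩ := exists_rankOne_mem hι hgN hg hw hwg
  obtain ⟨j, x', hx', h', hxj⟩ := exists_rankOne_single_mem hι hx hy h hxy
  obtain ⟨i, hij, c, hc, hcN⟩ := exists_transvection_mem hι hx' h' hxj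
  refine ⟨Ideal.span {c}, by simpa, (Subgroup.closure_le N).2 ?_⟩
  rintro _ ⟨k, l, hkl, r, hr, rfl⟩
  obtain ⟨s, rfl⟩ := Ideal.mem_span_singleton.1 hr
  exact transvection_mem_of_mem hι hcN hkl s

end Level

section Centrality

section CommRing

variable [CommRing R] {I : Ideal R}

/-- The principal congruence subgroup of level `I`, the matrices congruent to the identity modulo
`I`, encoded as the kernel of reduction modulo `I`. It has finite index when `R ⧸ I` is finite. -/
def congruenceSubgroup (I : Ideal R) : Subgroup (Matrix.SpecialLinearGroup ι R) :=
  (Matrix.SpecialLinearGroup.map (Ideal.Quotient.mk I)).ker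

instance congruenceSubgroup_normal :
    (congruenceSubgroup I : Subgroup (Matrix.SpecialLinearGroup ι R)).Normal :=
  MonoidHom.normal_ker _

theorem mem_congruenceSubgroup_iff {A : Matrix.SpecialLinearGroup ι R} :
    A ∈ congruenceSubgroup I ↔ ∀ i j, (A.1 - 1) i j ∈ I := by
  rw [congruenceSubgroup, MonoidHom.mem_ker, Matrix.SpecialLinearGroup.ext_iff]
  refine forall₂_congr fun i j ↦ ?_
  rw [Matrix.SpecialLinearGroup.map_apply_coe, coe_one, ← map_one (Ideal.Quotient.mk I).mapMatrix,
    RingHom.mapMatrix_apply, RingHom.mapMatrix_apply, map_apply, map_apply, Ideal.Quotient.eq,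
    Matrix.sub_apply]

theorem elementaryOfIdeal_le_congruenceSubgroup :
    elementaryOfIdeal I ≤ (congruenceSubgroup I : Subgroup (Matrix.SpecialLinearGroup ι R)) := by
  refine (Subgroup.closure_le _).2 ?_
  rintro _ ⟨i, j, hij, c, hc, rfl⟩
  refine mem_congruenceSubgroup_iff.2 fun k l ↦ ?_
  rw [transvection_coe, add_sub_cancel_left, single_apply]
  split_ifs
  exacts [hc, zero_mem I]

theorem mulVec_sub_apply_mem {A : Matrix.SpecialLinearGroup ι R} (hA : A ∈ congruenceSubgroup I)
    (v : ι → R) (i : ι) : (A.1 *ᵥ v - v) i ∈ I := by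
  rw [← one_mulVec v, mulVec_mulVec, mul_one, ← sub_mulVec]
  exact sum_mem fun j _ ↦ I.mul_mem_right _ (mem_congruenceSubgroup_iff.1 hA i j)

theorem vecMul_sub_apply_mem {A : Matrix.SpecialLinearGroup ι R} (hA : A ∈ congruenceSubgroup I)
    (v : ι → R) (j : ι) : (v ᵥ* A.1 - v) j ∈ I := by
  rw [← vecMul_one v, vecMul_vecMul, one_mul, ← vecMul_sub]
  exact sum_mem fun i _ ↦ I.mul_mem_left _ (mem_congruenceSubgroup_iff.1 hA i j)

theorem rankOne_mem_elementaryOfIdeal_left {p : ι} {x : ι → R} (hx : ∀ i, x i ∈ I)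
    (h : Pi.single p 1 ⬝ᵥ x = 0) : rankOne x (Pi.single p 1) h ∈ elementaryOfIdeal I :=
  rankOne_mem_left (fun i hi ↦ transvection_mem_elementaryOfIdeal hi (hx i)) h

theorem rankOne_mem_elementaryOfIdeal_right {p : ι} {y : ι → R} (hy : ∀ j, y j ∈ I)
    (h : y ⬝ᵥ Pi.single p 1 = 0) : rankOne (Pi.single p 1) y h ∈ elementaryOfIdeal I :=
  rankOne_mem_right (fun j hj ↦ transvection_mem_elementaryOfIdeal hj (hy j)) h

theorem commutator_transvection_mem_left {A : Matrix.SpecialLinearGroup ι R}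
    (hA : A ∈ congruenceSubgroup I) {i p : ι} (hip : i ≠ p)
    (hp : Pi.single p 1 ᵥ* A.1 = Pi.single p 1) (c : R) :
    ⁅A, transvection hip c⁆ ∈ elementaryOfIdeal I := by
  have h : Pi.single p (1 : R) ⬝ᵥ Pi.single i c = 0 := by simp [hip]
  rw [← mul_one c, ← rankOne_single_single hip c 1 h, commutator_rankOne_left hp h]
  exact rankOne_mem_elementaryOfIdeal_left (mulVec_sub_apply_mem hA _) _

theorem commutator_transvection_mem_right {A : Matrix.SpecialLinearGroup ι R}
    (hA : A ∈ congruenceSubgroup I) {p j : ι} (hpj : p ≠ j)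
    (hp : A.1 *ᵥ Pi.single p 1 = Pi.single p 1) (c : R) :
    ⁅A, transvection hpj c⁆ ∈ elementaryOfIdeal I := by
  have h : Pi.single j c ⬝ᵥ Pi.single p (1 : R) = 0 := by simp [hpj.symm]
  rw [← one_mul c, ← rankOne_single_single hpj 1 c h, commutator_rankOne_right hp h]
  exact rankOne_mem_elementaryOfIdeal_right (vecMul_sub_apply_mem (inv_mem hA) _) _

theorem closure_star_eq_elementary_univ (p : ι) :
    Subgroup.closure ({g | ∃ (i : ι) (hi : i ≠ p) (c : R), transvection hi c = g} ∪
      {g | ∃ (j : ι) (hj : p ≠ j) (c : R), transvection hj c = g}) = elementary Set.univ := by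
  set K : Subgroup (Matrix.SpecialLinearGroup ι R) := Subgroup.closure _
  refine le_antisymm ((Subgroup.closure_le _).2 ?_) ((Subgroup.closure_le _).2 ?_)
  · rintro _ (⟨i, hi, c, rfl⟩ | ⟨j, hj, c, rfl⟩) <;>
      exact transvection_mem_elementary (Set.mem_univ _) (Set.mem_univ _) _ _
  · rintro _ ⟨i, -, j, -, hij, c, rfl⟩
    have hcol (i : ι) (hi : i ≠ p) (c : R) : transvection hi c ∈ K :=
      Subgroup.subset_closure (.inl ⟨i, hi, c, rfl⟩)
    have hrow (j : ι) (hj : p ≠ j) (c : R) : transvection hj c ∈ K :=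
      Subgroup.subset_closure (.inr ⟨j, hj, c, rfl⟩)
    obtain rfl | hi := eq_or_ne i p
    · exact hrow j hij c
    obtain rfl | hj := eq_or_ne p j
    · exact hcol i hi c
    rw [← mul_one c, ← commutator_transvection hi hj hij, commutatorElement_def]
    have ha := hcol i hi c
    have hb := hrow j hj 1
    exact mul_mem (mul_mem (mul_mem ha hb) (inv_mem ha)) (inv_mem hb)

end CommRing

variable [EuclideanDomain R] {I : Ideal R} {N : Subgroup (Matrix.SpecialLinearGroup ι R)} [N.Normal]
  {A : Matrix.SpecialLinearGroup ι R}

theorem mem_upperCentralSeriesStep_of_mem_block (hI : elementaryOfIdeal I ≤ N)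
    (hA : A ∈ congruenceSubgroup I) {p : ι} (hp : A ∈ block {p}ᶜ) :
    A ∈ N.upperCentralSeriesStep := by
  obtain ⟨hrow, hcol⟩ := hp p (by simp)
  refine mem_upperCentralSeriesStep_of_closure_eq_top
    ((closure_star_eq_elementary_univ p).trans elementary_univ) ?_
  rintro _ (⟨i, hi, c, rfl⟩ | ⟨j, hj, c, rfl⟩)
  · exact hI (commutator_transvection_mem_left hA hi hrow c)
  · exact hI (commutator_transvection_mem_right hA hj hcol c)

theorem mem_upperCentralSeriesStep_of_apply_eq_one (hI : elementaryOfIdeal I ≤ N)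
    (hA : A ∈ congruenceSubgroup I) {p : ι} (hp : A.1 p p = 1) : A ∈ N.upperCentralSeriesStep := by
  set w := Pi.single p 1 - Pi.single p 1 ᵥ* A.1
  have hw : w ⬝ᵥ Pi.single p 1 = 0 := by simp [w, hp]
  have hright : rankOne (Pi.single p 1) w hw ∈ elementaryOfIdeal I :=
    rankOne_mem_elementaryOfIdeal_right
      (fun j ↦ sub_mem_comm_iff.1 (vecMul_sub_apply_mem hA _ j)) hw
  have hB := mul_mem hA (elementaryOfIdeal_le_congruenceSubgroup hright)
  have hBp : Pi.single p 1 ᵥ* (A * rankOne _ _ hw).1 = Pi.single p 1 := by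
    rw [coe_mul, ← vecMul_vecMul, coe_rankOne, vecMul_add, vecMul_one, vecMul_vecMulVec]
    simp [w, hp]
  have hleft : rankOne _ _ (dotProduct_sub_mulVec_eq_zero hBp (Pi.single p 1)) ∈
      elementaryOfIdeal I :=
    rankOne_mem_elementaryOfIdeal_left
      (fun i ↦ sub_mem_comm_iff.1 (mulVec_sub_apply_mem hB _ i)) _
  have hmem := mem_upperCentralSeriesStep_of_mem_block hI
    (mul_mem (elementaryOfIdeal_le_congruenceSubgroup hleft) hB) (p := p)
    (rankOne_mul_mem_block (by simp [block]) hBp)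
  have hNZ := hI.trans (le_upperCentralSeriesStep N)
  rwa [mul_mem_cancel_left (hNZ hleft), mul_mem_cancel_right (hNZ hright)] at hmem

theorem mem_upperCentralSeriesStep_of_apply_eq_zero (hI : elementaryOfIdeal I ≤ N)
    (hA : A ∈ congruenceSubgroup I) {p a : ι} (hap : a ≠ p) (ha : A.1 p a = 0) :
    A ∈ N.upperCentralSeriesStep := by
  -- `x` lies in the hyperplane `x a = 0` and has product `1 - A p p` with row `p` of `A`, so the
  -- column operation below puts `1 - A p p` in position `(p, a)`. Conjugation by `t` adds it to
  -- the diagonal entry.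
  set x := (1 - A.1 p p) • (A⁻¹.1 *ᵥ Pi.single p 1 - Pi.single a (A⁻¹.1 a p))
  have hx : Pi.single a 1 ⬝ᵥ x = 0 := by simp [x]
  have hx' : rankOne x _ hx ∈ elementaryOfIdeal I := by
    refine rankOne_mem_elementaryOfIdeal_left (fun i ↦ I.mul_mem_right _ ?_) hx
    simpa using I.neg_mem (mem_congruenceSubgroup_iff.1 hA p p)
  have hrow : Pi.single p 1 ᵥ* (A * rankOne x _ hx).1 =
      Pi.single p 1 ᵥ* A.1 + Pi.single a (1 - A.1 p p) := by
    have hdot : (Pi.single p 1 ᵥ* A.1) ⬝ᵥ x = 1 - A.1 p p := by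
      rw [dotProduct_smul, dotProduct_sub, dotProduct_mulVec, vecMul_vecMul, ← coe_mul,
        mul_inv_cancel]
      simp [ha]
    rw [coe_mul, ← vecMul_vecMul, coe_rankOne, vecMul_add, vecMul_one, vecMul_vecMulVec, hdot]
    simp [← Pi.single_smul]
  let t := transvection hap (1 : R)
  have ht : Pi.single p 1 ᵥ* t⁻¹.1 = Pi.single p 1 :=
    vecMul_inv_eq (by simp [t, vecMul_transvection, hap])
  have hpp : (t⁻¹ * (A * rankOne x _ hx) * t).1 p p = 1 := by
    rw [← row_apply (t⁻¹ * (A * rankOne x _ hx) * t).1, ← single_one_vecMul, coe_mul, coe_mul,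
      ← vecMul_vecMul, ← vecMul_vecMul, ht, hrow, vecMul_transvection]
    simp [ha, hap]
  have hAx := mul_mem hA (elementaryOfIdeal_le_congruenceSubgroup hx')
  have hmem := mem_upperCentralSeriesStep_of_apply_eq_one hI
    (congruenceSubgroup_normal.conj_mem' _ hAx t) hpp
  rwa [mul_assoc, (upperCentralSeriesStep_normal N).mem_comm_iff, mul_inv_cancel_right,
    mul_mem_cancel_right (le_upperCentralSeriesStep N (hI hx'))] at hmem

theorem congruenceSubgroup_le_upperCentralSeriesStep (hι : 3 ≤ ENat.card ι)
    (hI : elementaryOfIdeal I ≤ N) : congruenceSubgroup I ≤ N.upperCentralSeriesStep := by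
  intro A hA
  obtain ⟨p⟩ : Nonempty ι := by
    rw [← ENat.one_le_card_iff_nonempty]
    exact le_trans (by norm_num) hι
  obtain ⟨a, hap, -⟩ := ENat.exists_ne_ne_of_three_le hι p p
  obtain ⟨b, hbp, hba⟩ := ENat.exists_ne_ne_of_three_le hι p a
  obtain ⟨g, hg, hga⟩ := exists_elementary_vecMul_apply_eq_zero hba.symm (Pi.single p 1 ᵥ* A.1)
  have hgp : Pi.single p 1 ᵥ* g⁻¹.1 = Pi.single p 1 :=
    vecMul_inv_eq (elementary_le_block _ hg p (by simp [hap.symm, hbp.symm])).1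
  have hpa : (g⁻¹ * A * g).1 p a = 0 := by
    rw [← row_apply (g⁻¹ * A * g).1, ← single_one_vecMul, coe_mul, coe_mul, ← vecMul_vecMul,
      ← vecMul_vecMul, hgp, hga]
  have hmem := mem_upperCentralSeriesStep_of_apply_eq_zero hI
    (congruenceSubgroup_normal.conj_mem' _ hA g) hap hpa
  rwa [mul_assoc, (upperCentralSeriesStep_normal N).mem_comm_iff, mul_inv_cancel_right] at hmem

end Centrality

section FiniteQuotient

theorem isPerfect [EuclideanDomain R] (hι : 3 ≤ ENat.card ι) :
    Group.IsPerfect (Matrix.SpecialLinearGroup ι R) := by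
  refine ⟨top_le_iff.1 (elementary_univ.symm.trans_le ((Subgroup.closure_le _).2 ?_))⟩
  rintro _ ⟨i, -, j, -, hij, c, rfl⟩
  obtain ⟨k, hki, hkj⟩ := ENat.exists_ne_ne_of_three_le hι i j
  rw [← mul_one c, ← commutator_transvection hki.symm hkj hij]
  exact Subgroup.commutator_mem_commutator (Subgroup.mem_top _) (Subgroup.mem_top _)

theorem finiteIndex_congruenceSubgroup [CommRing R] (I : Ideal R) [Finite (R ⧸ I)] :
    (congruenceSubgroup I : Subgroup (Matrix.SpecialLinearGroup ι R)).FiniteIndex := by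
  have : Finite (Matrix.SpecialLinearGroup ι (R ⧸ I)) := Subtype.finite
  exact Subgroup.finiteIndex_ker _

theorem finite_quotient_of_elementaryOfIdeal_le [EuclideanDomain R] (hι : 3 ≤ ENat.card ι)
    {I : Ideal R} [Finite (R ⧸ I)] {N : Subgroup (Matrix.SpecialLinearGroup ι R)} [N.Normal]
    (hI : elementaryOfIdeal I ≤ N) : Finite (Matrix.SpecialLinearGroup ι R ⧸ N) := by
  have := isPerfect (R := R) hι
  have hΓ := finiteIndex_congruenceSubgroup (ι := ι) I
  have hZ := Subgroup.finiteIndex_of_le (congruenceSubgroup_le_upperCentralSeriesStep hι hI)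
  rw [N.upperCentralSeriesStep_eq_comap_center] at hZ
  have : (Subgroup.center (Matrix.SpecialLinearGroup ι R ⧸ N)).FiniteIndex :=
    ⟨by rw [← Subgroup.index_comap_of_surjective _ (QuotientGroup.mk'_surjective N)]
        exact hZ.index_ne_zero⟩
  exact finite_of_isPerfect

end FiniteQuotient

theorem card_dvd_card_rootsOfUnity_of_le_center [CommRing R] [Nonempty ι]
    {N : Subgroup (Matrix.SpecialLinearGroup ι R)} (hN : N ≤ Subgroup.center _) :
    Nat.card N ∣ Nat.card (rootsOfUnity (Fintype.card ι) R) := by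
  rw [← Nat.card_congr
    (Matrix.SpecialLinearGroup.center_equiv_rootsOfUnity' (Classical.arbitrary ι)).toEquiv]
  exact Subgroup.card_dvd_of_le hN

end SpecialLinearNormal

theorem SL_normal_subgroup_central_or_finite_quotient_general {ι R : Type*} [Fintype ι]
    [DecidableEq ι] [EuclideanDomain R] [Ring.HasFiniteQuotients R] (hι : 3 ≤ Fintype.card ι)
    (N : Subgroup (Matrix.SpecialLinearGroup ι R)) [N.Normal] :
    (N ≤ Subgroup.center (Matrix.SpecialLinearGroup ι R) ∧
      Nat.card N ∣ Nat.card (rootsOfUnity (Fintype.card ι) R)) ∨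
      Finite (Matrix.SpecialLinearGroup ι R ⧸ N) := by
  have : Nonempty ι := Fintype.card_pos_iff.1 (by lia)
  have hι' : 3 ≤ ENat.card ι := by rw [ENat.card_eq_coe_fintype_card]; exact_mod_cast hι
  refine or_iff_not_imp_left.2 fun hN ↦ ?_
  obtain ⟨I, hI0, hI⟩ := SpecialLinearNormal.exists_elementaryOfIdeal_le hι' fun hc ↦
    hN ⟨hc, SpecialLinearNormal.card_dvd_card_rootsOfUnity_of_le_center hc⟩
  have := Ring.HasFiniteQuotients.finiteQuotient hI0
  exact SpecialLinearNormal.finite_quotient_of_elementaryOfIdeal_le hι' hI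

/-- **Margulis normal subgroup theorem for `SL_n(ℤ)`.**  Let `N` be a normal
subgroup of `SL_n(ℤ)` for `n ≥ 3`.  Then either `N` is contained in the center of
`SL_n(ℤ)` (hence `N` is finite, of order dividing `2`), or the quotient
`SL_n(ℤ)/N` is finite. -/
theorem SL_normal_subgroup_central_or_finite_quotient
    (n : ℕ) (hn : 3 ≤ n) (N : Subgroup (Matrix.SpecialLinearGroup (Fin n) ℤ))
    [hN : N.Normal] :
    (N ≤ Subgroup.center (Matrix.SpecialLinearGroup (Fin n) ℤ) ∧ Nat.card N ∣ 2) ∨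
      Finite (Matrix.SpecialLinearGroup (Fin n) ℤ ⧸ N) := by
  refine (SL_normal_subgroup_central_or_finite_quotient_general (by simpa) N).imp_left
    (And.imp_right fun h ↦ h.trans ?_)
  simpa using Subgroup.card_subgroup_dvd_card (rootsOfUnity (Fintype.card (Fin n)) ℤ)
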